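/- For a core matching K with k(K) ≥ 3 crossings, n_1(K) ≤ 3·k(K), and equality holds if and only if n_1(K) = 3k, n_k(K) = 1 and n_i(K) = 0 for i ∉ {1,k}. -/

import Mathlib

/-- Two chords `(p.1, p.2)` and `(q.1, q.2)` of a circle with vertices labeled
`0, 1, …, n-1` in circular order interleave, i.e. cross, when
`p.1 < q.1 < p.2 < q.2`. -/
def Interleaves {n : ℕ} (p q : Fin n × Fin n) : Prop :=
  p.1 < q.1 ∧ q.1 < p.2 ∧ p.2 < q.2

instance {n : ℕ} (p q : Fin n × Fin n) : Decidable (Interleaves p q) :=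
  inferInstanceAs (Decidable (_ ∧ _ ∧ _))

/-- The number of crossings of a set of chords (each chord recorded with its
endpoints in increasing order): the number of unordered pairs of chords whose
endpoints interleave around the circle. -/
def crossNum {n : ℕ} (D : Finset (Fin n × Fin n)) : ℕ :=
  ((D ×ˢ D).filter fun pq => Interleaves pq.1 pq.2).card

/-- A perfect matching of the `n` points `0, …, n-1` on a circle: a set of
chords, each recorded with increasing endpoints, such that every vertex
belongs to exactly one chord. -/
structure CircMatching (n : ℕ) where
  chords : Finset (Fin n × Fin n)
  lt : ∀ p ∈ chords, p.1 < p.2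
  mem_unique : ∀ v : Fin n, ∃! p, p ∈ chords ∧ (p.1 = v ∨ p.2 = v)


/-- Two chords cross when their endpoints interleave, in either order. -/
def CrossRel {n : ℕ} (p q : Fin n × Fin n) : Prop :=
  Interleaves p q ∨ Interleaves q p

/-- A core matching: a perfect matching in which every chord is involved in at
least one crossing. -/
def IsCoreMatching {n : ℕ} (M : CircMatching n) : Prop :=
  ∀ p ∈ M.chords, ∃ q ∈ M.chords, CrossRel p q

/-- The `n` points on the unit circle, labeled in circular order. -/
noncomputable def circPt (n : ℕ) (j : Fin n) : ℂ :=
  Complex.exp (2 * (Real.pi : ℂ) * Complex.I * ((j : ℕ) : ℂ) / ((n : ℕ) : ℂ))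

/-- The chord of the unit circle joining the points labeled `p.1` and `p.2`,
as a segment in the plane. -/
noncomputable def chordSeg (n : ℕ) (p : Fin n × Fin n) : Set ℂ :=
  segment ℝ (circPt n p.1) (circPt n p.2)

/-- The complement of a set of chords in the closed unit disk. -/
noncomputable def diskComplement {n : ℕ} (D : Finset (Fin n × Fin n)) : Set ℂ :=
  Metric.closedBall (0 : ℂ) 1 \ ⋃ p ∈ D, chordSeg n p

/-- The regions of a set of chords: the connected components of the complement
of the chords in the closed unit disk. -/
noncomputable def regions {n : ℕ} (D : Finset (Fin n × Fin n)) : Set (Set ℂ) :=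
  {C | ∃ x ∈ diskComplement D, C = connectedComponentIn (diskComplement D) x}

/-- The number of boundary arcs of a region: the number of connected components
of its intersection with the unit circle. -/
noncomputable def arcCount (C : Set ℂ) : ℕ :=
  Nat.card (ConnectedComponents ↥(C ∩ Metric.sphere (0 : ℂ) 1))

/-- `nReg D i` is the number `nᵢ` of regions of the chord configuration `D`
having exactly `i` boundary arcs. -/
noncomputable def nReg {n : ℕ} (D : Finset (Fin n × Fin n)) (i : ℕ) : ℕ :=
  Nat.card {C : Set ℂ // C ∈ regions D ∧ arcCount C = i}

/-!
Let `M` have `m` chords and `k` crossings, and let `c` be the number of connected components of its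
crossing graph. A graph has at most as many vertices as edges and components together, so
`m ≤ k + c`; as every chord of a core matching is crossed, every component contains an edge,
so `c ≤ k`. The `2 * m` points cut the circle into `2 * m` arcs, and two arcs on the same side of
every chord border a common region.

Call an arc mixed if its ends lie on chords from different components. No chord separates a mixed
arc starting on a component from the arc that precedes the next point of that component, so these
two arcs border the same region and a mixed arc is never alone in its region. If `c ≥ 2`, walking
around the circle shows that every component starts a mixed arc, whence
`n₁ ≤ 2 * m - c ≤ 2 * k + c ≤ 3 * k`; if `c ≤ 1`, then `n₁ ≤ 2 * m ≤ 2 * (k + 1) < 3 * k`.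

Equality forces `c = k`, exactly one mixed arc starting on each component, and every other arc to be
alone in its region. A chord with mixed arcs on both of its sides would give its component a mixed
arc on each side, hence two of them; so all `k` mixed arcs border one region.
-/

open Set

section Fibers

variable {α β : Type*} {f : α → β} {T : Set α}

/-- The number of points of `β` over which the map `f` has exactly `i` preimages. -/
noncomputable def fiberCount (f : α → β) (i : ℕ) : ℕ :=
  {b | (f ⁻¹' {b}).ncard = i}.ncard

lemma exists_fiber_eq_singleton {b : β} (hb : (f ⁻¹' {b}).ncard = 1) :
    ∃ a, f a = b ∧ f ⁻¹' {b} = {a} := by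
  obtain ⟨a, ha⟩ := ncard_eq_one.1 hb
  exact ⟨a, ha.ge rfl, ha⟩

lemma setOf_ncard_fiber_eq_one_subset_image_compl (hT : ∀ t ∈ T, ∃ a ≠ t, f a = f t) :
    {b | (f ⁻¹' {b}).ncard = 1} ⊆ f '' Tᶜ := by
  intro b hb
  obtain ⟨a, hab, ha⟩ := exists_fiber_eq_singleton hb
  refine ⟨a, fun haT => ?_, hab⟩
  obtain ⟨a', hne, heq⟩ := hT a haT
  exact hne (ha.le (heq.trans hab))

lemma fiberCount_one_add_ncard_le [Finite α] (hT : ∀ t ∈ T, ∃ a ≠ t, f a = f t) :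
    fiberCount f 1 + T.ncard ≤ Nat.card α :=
  calc fiberCount f 1 + T.ncard
      ≤ (f '' Tᶜ).ncard + T.ncard :=
        Nat.add_le_add_right (ncard_le_ncard (setOf_ncard_fiber_eq_one_subset_image_compl hT)) _
    _ ≤ Tᶜ.ncard + T.ncard := Nat.add_le_add_right ncard_image_le _
    _ = Nat.card α := by rw [add_comm, ncard_add_ncard_compl]

lemma fiber_eq_singleton_of_fiberCount_one_add_ncard_eq [Finite α]
    (hT : ∀ t ∈ T, ∃ a ≠ t, f a = f t) (h : fiberCount f 1 + T.ncard = Nat.card α)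
    {a : α} (ha : a ∉ T) : f ⁻¹' {f a} = {a} := by
  have himage : {b | (f ⁻¹' {b}).ncard = 1} = f '' Tᶜ := by
    refine eq_of_subset_of_ncard_le (setOf_ncard_fiber_eq_one_subset_image_compl hT) ?_
    refine (ncard_image_le (s := Tᶜ)).trans (Nat.le_of_add_le_add_left (a := T.ncard) ?_)
    rw [ncard_add_ncard_compl, ← h, add_comm, fiberCount]
  obtain ⟨b, -, hb⟩ := exists_fiber_eq_singleton (himage.ge ⟨a, ha, rfl⟩)
  rw [hb, show a = b from hb.le rfl]

variable (hconst : ∀ s ∈ T, ∀ t ∈ T, f s = f t) (hsing : ∀ a ∉ T, f ⁻¹' {f a} = {a})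

include hconst hsing

lemma fiber_eq_of_mem {t : α} (ht : t ∈ T) : f ⁻¹' {f t} = T := by
  refine Subset.antisymm (fun a (hat : f a = f t) => ?_) fun s hs => hconst s hs t ht
  by_contra ha
  exact ha ((hsing a ha).le hat.symm ▸ ht)

lemma fiberCount_ncard_eq_one (hT : 1 < T.ncard) : fiberCount f T.ncard = 1 := by
  obtain ⟨t, ht⟩ := nonempty_of_ncard_ne_zero (by lia : T.ncard ≠ 0)
  refine ncard_eq_one.2 ⟨f t, Subset.antisymm (fun b (hb : _ = _) => ?_) ?_⟩
  · obtain ⟨a, rfl⟩ := nonempty_of_ncard_ne_zero (by rw [hb]; lia)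
    by_cases ha : a ∈ T
    · exact hconst a ha t ht
    · rw [hsing a ha, ncard_singleton] at hb
      lia
  · rintro _ rfl
    rw [mem_ofPred_eq, fiber_eq_of_mem hconst hsing ht]

lemma fiberCount_eq_zero {i : ℕ} (h0 : i ≠ 0) (h1 : i ≠ 1) (hT : i ≠ T.ncard) :
    fiberCount f i = 0 := by
  suffices {b | (f ⁻¹' {b}).ncard = i} = ∅ by rw [fiberCount, this, ncard_empty]
  refine eq_empty_of_forall_notMem fun b (hb : _ = i) => ?_
  obtain ⟨a, rfl⟩ := nonempty_of_ncard_ne_zero (hb.trans_ne h0)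
  by_cases ha : a ∈ T
  · exact hT (by rw [← hb, fiber_eq_of_mem hconst hsing ha])
  · exact h1 (by rw [← hb, hsing a ha, ncard_singleton])

end Fibers

section Graphs

variable {V : Type*} [Finite V] (G : SimpleGraph V)

lemma sum_card_edgeSet_toSimpleGraph_le [Fintype G.ConnectedComponent] :
    ∑ C : G.ConnectedComponent, Nat.card C.toSimpleGraph.edgeSet ≤ Nat.card G.edgeSet := by
  rw [← Nat.card_sigma]
  have hmem {C : G.ConnectedComponent} (e : C.toSimpleGraph.edgeSet) {v : V}
      (hv : v ∈ (C.toSimpleGraph_hom.mapEdgeSet e : Sym2 V)) : G.connectedComponentMk v = C := by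
    obtain ⟨u, -, rfl⟩ := Sym2.mem_map.1 hv
    exact u.2
  refine Nat.card_le_card_of_injective
    (fun e : Σ C : G.ConnectedComponent, C.toSimpleGraph.edgeSet =>
      e.1.toSimpleGraph_hom.mapEdgeSet e.2) ?_
  rintro ⟨C, e⟩ ⟨C', e'⟩ (h : C.toSimpleGraph_hom.mapEdgeSet e = C'.toSimpleGraph_hom.mapEdgeSet e')
  have hv := Sym2.out_fst_mem (C.toSimpleGraph_hom.mapEdgeSet e : Sym2 V)
  obtain rfl : C = C' := (hmem e hv).symm.trans (hmem e' (h ▸ hv))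
  rw [SimpleGraph.Hom.mapEdgeSet.injective _ Subtype.val_injective h]

lemma card_le_card_edgeSet_add_card_connectedComponent :
    Nat.card V ≤ Nat.card G.edgeSet + Nat.card G.ConnectedComponent := by
  have := Fintype.ofFinite G.ConnectedComponent
  calc Nat.card V
      = ∑ C : G.ConnectedComponent, Nat.card C := by
        rw [← Nat.card_sigma]
        exact (Nat.card_congr (Equiv.sigmaFiberEquiv G.connectedComponentMk)).symm
    _ ≤ ∑ C : G.ConnectedComponent, (Nat.card C.toSimpleGraph.edgeSet + 1) :=
        Finset.sum_le_sum fun C _ => C.connected_toSimpleGraph.card_vert_le_card_edgeSet_add_one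
    _ ≤ Nat.card G.edgeSet + Nat.card G.ConnectedComponent := by
        rw [Finset.sum_add_distrib, Finset.sum_const, Finset.card_univ, smul_eq_mul, mul_one,
          Nat.card_eq_fintype_card (α := G.ConnectedComponent)]
        gcongr
        exact sum_card_edgeSet_toSimpleGraph_le G

variable {G} in
lemma card_connectedComponent_le_card_edgeSet (hG : ∀ v, ∃ w, G.Adj v w) :
    Nat.card G.ConnectedComponent ≤ Nat.card G.edgeSet := by
  choose nbr hnbr using hG
  refine Nat.card_le_card_of_injective
    (fun C : G.ConnectedComponent => (⟨s(C.out, nbr C.out), hnbr _⟩ : G.edgeSet)) fun C C' h => ?_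
  have key : G.Reachable C.out C'.out := by
    rcases Sym2.eq_iff.1 (Subtype.ext_iff.1 h) with ⟨h, -⟩ | ⟨h, -⟩
    · rw [h]
    · exact h ▸ (hnbr _).reachable.symm
  rw [← C.out_eq, ← C'.out_eq]
  exact SimpleGraph.ConnectedComponent.sound key

end Graphs
section Topology

lemma card_connectedComponents_eq {X ι : Type*} [TopologicalSpace X] {U : ι → Set X}
    (hopen : ∀ i, IsOpen (U i)) (hconn : ∀ i, IsConnected (U i))
    (hdisj : Pairwise (Function.onFun Disjoint U)) (hunion : ⋃ i, U i = univ) :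
    Nat.card (ConnectedComponents X) = Nat.card ι := by
  have hclopen (i : ι) : IsClopen (U i) := by
    refine ⟨⟨?_⟩, hopen i⟩
    have : (U i)ᶜ = ⋃ j ≠ i, U j := by
      ext x
      obtain ⟨j, hj⟩ := mem_iUnion.1 (hunion.ge (mem_univ x))
      refine ⟨fun hx => mem_biUnion (fun h : j = i => hx (h ▸ hj)) hj, fun hx hxi => ?_⟩
      obtain ⟨l, hl, hxl⟩ := mem_iUnion₂.1 hx
      exact (hdisj hl).notMem_of_mem_left hxl hxi
    rw [this]
    exact isOpen_biUnion fun j _ => hopen j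
  exact Nat.card_congr (ConnectedComponents.equivOfIsClopenOfIsConnected hclopen hdisj hunion hconn)

end Topology

section HalfPlanes

/-- The affine functional on `ℂ = ℝ²` whose zero set is the line through the points of the unit
circle at angles `α` and `β`, normalized to be positive on the arc from `α` to `β`. -/
noncomputable def chordSide (α β : ℝ) (z : ℂ) : ℝ :=
  inner ℝ (circleMap 0 1 ((α + β) / 2)) z - Real.cos ((β - α) / 2)

lemma chordSide_circleMap (α β θ : ℝ) :
    chordSide α β (circleMap 0 1 θ) = 2 * (Real.sin ((θ - α) / 2) * Real.sin ((β - θ) / 2)) := by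
  have hinner : inner ℝ (circleMap 0 1 ((α + β) / 2)) (circleMap 0 1 θ)
      = Real.cos (θ - (α + β) / 2) := by
    simp only [Complex.inner, Complex.mul_re, Complex.conj_re, Complex.conj_im, circleMap_zero_re,
      circleMap_zero_im, Real.cos_sub]
    ring
  rw [chordSide, hinner, Real.cos_sub_cos, show (β - θ) / 2 = -((θ - β) / 2) by ring, Real.sin_neg,
    show (θ - (α + β) / 2 + (β - α) / 2) / 2 = (θ - α) / 2 by ring,
    show (θ - (α + β) / 2 - (β - α) / 2) / 2 = (θ - β) / 2 by ring]
  ring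

lemma chordSide_circleMap_left (α β : ℝ) : chordSide α β (circleMap 0 1 α) = 0 := by
  simp [chordSide_circleMap]

lemma chordSide_circleMap_right (α β : ℝ) : chordSide α β (circleMap 0 1 β) = 0 := by
  simp [chordSide_circleMap]

lemma continuous_chordSide (α β : ℝ) : Continuous (chordSide α β) := by
  unfold chordSide
  fun_prop

lemma isLinearMap_inner_right (w : ℂ) : IsLinearMap ℝ fun z : ℂ => inner ℝ w z :=
  ⟨fun _ _ => inner_add_right _ _ _, fun _ _ => inner_smul_right _ _ _⟩

lemma convex_setOf_chordSide_pos (α β : ℝ) : Convex ℝ {z | 0 < chordSide α β z} := by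
  simpa only [chordSide, sub_pos] using
    convex_halfSpace_gt (isLinearMap_inner_right _) _

lemma convex_setOf_chordSide_neg (α β : ℝ) : Convex ℝ {z | chordSide α β z < 0} := by
  simpa only [chordSide, sub_neg] using
    convex_halfSpace_lt (isLinearMap_inner_right _) _

lemma chordSide_eq_zero_of_mem_segment {α β : ℝ} {z : ℂ}
    (hz : z ∈ segment ℝ (circleMap 0 1 α) (circleMap 0 1 β)) : chordSide α β z = 0 := by
  have hconvex : Convex ℝ {z | chordSide α β z = 0} := by
    simpa only [chordSide, sub_eq_zero] using
      convex_hyperplane (isLinearMap_inner_right _) _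
  exact hconvex.segment_subset (chordSide_circleMap_left α β) (chordSide_circleMap_right α β) hz

variable {α β θ : ℝ}

lemma chordSide_circleMap_pos (hθ : θ ∈ Ioo α β) (h : β - α ≤ 2 * Real.pi) :
    0 < chordSide α β (circleMap 0 1 θ) := by
  rw [chordSide_circleMap]
  have hleft : 0 < Real.sin ((θ - α) / 2) :=
    Real.sin_pos_of_pos_of_lt_pi (by linarith [hθ.1]) (by linarith [hθ.2])
  have hright : 0 < Real.sin ((β - θ) / 2) :=
    Real.sin_pos_of_pos_of_lt_pi (by linarith [hθ.2]) (by linarith [hθ.1])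
  positivity

lemma chordSide_circleMap_nonpos (hα : 0 ≤ α) (hαβ : α ≤ β) (hβ : β ≤ 2 * Real.pi)
    (hθ : θ ∈ Ico 0 (2 * Real.pi)) (hθ' : θ ∉ Ioo α β) :
    chordSide α β (circleMap 0 1 θ) ≤ 0 := by
  rw [chordSide_circleMap]
  obtain ⟨h0, h1⟩ := hθ
  rcases le_or_gt θ α with h | h
  · have hleft : Real.sin ((θ - α) / 2) ≤ 0 :=
      Real.sin_nonpos_of_nonpos_of_neg_pi_le (by linarith) (by linarith)
    have hright : 0 ≤ Real.sin ((β - θ) / 2) :=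
      Real.sin_nonneg_of_nonneg_of_le_pi (by linarith) (by linarith)
    linarith [mul_nonpos_of_nonpos_of_nonneg hleft hright]
  · have h' : β ≤ θ := le_of_not_gt fun hβ => hθ' ⟨h, hβ⟩
    have hleft : 0 ≤ Real.sin ((θ - α) / 2) :=
      Real.sin_nonneg_of_nonneg_of_le_pi (by linarith) (by linarith)
    have hright : Real.sin ((β - θ) / 2) ≤ 0 :=
      Real.sin_nonpos_of_nonpos_of_neg_pi_le (by linarith) (by linarith)
    linarith [mul_nonpos_of_nonneg_of_nonpos hleft hright]

lemma chordSide_circleMap_neg (hα : 0 ≤ α) (hαβ : α ≤ β) (hβ : β < 2 * Real.pi)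
    (hθ : θ ∈ Ico 0 (2 * Real.pi)) (hθ' : θ ∉ Icc α β) :
    chordSide α β (circleMap 0 1 θ) < 0 := by
  rw [chordSide_circleMap]
  obtain ⟨h0, h1⟩ := hθ
  rcases lt_or_ge θ α with h | h
  · have hleft : Real.sin ((θ - α) / 2) < 0 :=
      Real.sin_neg_of_neg_of_neg_pi_lt (by linarith) (by linarith)
    have hright : 0 < Real.sin ((β - θ) / 2) :=
      Real.sin_pos_of_pos_of_lt_pi (by linarith) (by linarith)
    linarith [mul_neg_of_neg_of_pos hleft hright]
  · have h' : β < θ := lt_of_not_ge fun hβ => hθ' ⟨h, hβ⟩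
    have hleft : 0 < Real.sin ((θ - α) / 2) :=
      Real.sin_pos_of_pos_of_lt_pi (by linarith) (by linarith)
    have hright : Real.sin ((β - θ) / 2) < 0 :=
      Real.sin_neg_of_neg_of_neg_pi_lt (by linarith) (by linarith)
    linarith [mul_neg_of_pos_of_neg hleft hright]

end HalfPlanes

section Arcs

/-- The angle of the `j`-th of `n` equally spaced points on the unit circle, so that consecutive
angles delimit the arcs between the labeled points. The last arc ends at `j = n`, where the angle is
`2 * π` rather than `0`. -/
noncomputable def vertexAngle (n j : ℕ) : ℝ := 2 * Real.pi * j / n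

/-- The open arc of the unit circle following the point labeled `i`. -/
def openArc {n : ℕ} (i : Fin n) : Set ℂ :=
  circleMap 0 1 '' Ioo (vertexAngle n i) (vertexAngle n (i + 1))

variable {n : ℕ}

lemma circPt_eq_circleMap (i : Fin n) : circPt n i = circleMap 0 1 (vertexAngle n i) := by
  rw [circPt, circleMap_zero, Complex.ofReal_one, one_mul, vertexAngle]
  push_cast
  ring_nf

lemma exists_circleMap_eq {z : ℂ} (hz : z ∈ Metric.sphere 0 1) :
    ∃ θ ∈ Ico 0 (2 * Real.pi), circleMap 0 1 θ = z := by
  rw [← abs_one, ← range_circleMap] at hz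
  obtain ⟨φ, rfl⟩ := hz
  obtain ⟨θ, hθ, h⟩ := (periodic_circleMap 0 1).exists_mem_Ico₀ Real.two_pi_pos φ
  exact ⟨θ, hθ, h.symm⟩

lemma openArc_subset_sphere (i : Fin n) : openArc i ⊆ Metric.sphere (0 : ℂ) 1 := by
  rintro _ ⟨θ, -, rfl⟩
  exact circleMap_mem_sphere 0 zero_le_one θ

lemma vertexAngle_zero : vertexAngle n 0 = 0 := by
  simp [vertexAngle]

lemma vertexAngle_nonneg (j : ℕ) : 0 ≤ vertexAngle n j := by
  unfold vertexAngle
  positivity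

variable [NeZero n]

variable (n) in
lemma vertexAngle_strictMono : StrictMono (vertexAngle n) := fun i j hij => by
  have : 0 < (n : ℝ) := by exact_mod_cast NeZero.pos n
  unfold vertexAngle
  gcongr

lemma vertexAngle_self : vertexAngle n n = 2 * Real.pi :=
  mul_div_cancel_right₀ _ (NeZero.ne _)

lemma vertexAngle_succ_le (i : Fin n) : vertexAngle n (i + 1) ≤ 2 * Real.pi :=
  vertexAngle_self.le.trans' ((vertexAngle_strictMono n).monotone i.2)

lemma vertexAngle_lt_two_pi (i : Fin n) : vertexAngle n i < 2 * Real.pi :=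
  (vertexAngle_strictMono n i.2).trans_eq vertexAngle_self

lemma Ioo_vertexAngle_subset (i : Fin n) :
    Ioo (vertexAngle n i) (vertexAngle n (i + 1)) ⊆ Ico 0 (2 * Real.pi) := fun _ hθ =>
  ⟨(vertexAngle_nonneg _).trans hθ.1.le, hθ.2.trans_le (vertexAngle_succ_le i)⟩

lemma isConnected_openArc (i : Fin n) : IsConnected (openArc i) :=
  (isConnected_Ioo (vertexAngle_strictMono n i.1.lt_succ_self)).image _
    (continuous_circleMap 0 1).continuousOn

lemma circleMap_midpoint_mem_openArc (i : Fin n) :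
    circleMap 0 1 ((vertexAngle n i + vertexAngle n (i + 1)) / 2) ∈ openArc i := by
  have := vertexAngle_strictMono n (Nat.lt_succ_self i)
  exact ⟨_, ⟨by linarith, by linarith⟩, rfl⟩

lemma pairwise_disjoint_openArc : Pairwise (Function.onFun Disjoint (openArc (n := n))) := by
  intro i j hij
  have hdisj :=
    (vertexAngle_strictMono n).monotone.pairwise_disjoint_on_Ioo_succ (Fin.val_ne_of_ne hij)
  have hinj : InjOn (circleMap 0 1) (Ico 0 (2 * Real.pi)) :=
    injOn_circleMap_of_abs_sub_le' one_ne_zero (sub_zero _).le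
  exact disjoint_image_image fun θ hθ φ hφ h => hdisj.ne_of_mem hθ hφ
    (hinj (Ioo_vertexAngle_subset i hθ) (Ioo_vertexAngle_subset j hφ) h)

lemma mem_openArc_iff (i : Fin n) {z : ℂ} (hz : z ∈ Metric.sphere 0 1) :
    z ∈ openArc i ↔ 0 < chordSide (vertexAngle n i) (vertexAngle n (i + 1)) z := by
  constructor
  · rintro ⟨θ, hθ, rfl⟩
    exact chordSide_circleMap_pos hθ
      (by linarith [vertexAngle_nonneg (n := n) i, vertexAngle_succ_le i])
  · obtain ⟨θ, hθ, rfl⟩ := exists_circleMap_eq hz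
    contrapose!
    exact fun hi => chordSide_circleMap_nonpos (vertexAngle_nonneg _)
      (vertexAngle_strictMono n i.1.lt_succ_self).le (vertexAngle_succ_le i) hθ
      fun h => hi (mem_image_of_mem _ h)

lemma exists_eq_circPt_or_mem_openArc {z : ℂ} (hz : z ∈ Metric.sphere 0 1) :
    ∃ i : Fin n, z = circPt n i ∨ z ∈ openArc i := by
  obtain ⟨θ, hθ, rfl⟩ := exists_circleMap_eq hz
  rcases hθ.1.eq_or_lt with rfl | hpos
  · exact ⟨0, .inl (by rw [circPt_eq_circleMap, Fin.val_zero, vertexAngle_zero])⟩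
  have hcover := (vertexAngle_strictMono n).monotone.biUnion_Ico_Ioc_map_succ 0 n
  simp only [vertexAngle_self, vertexAngle_zero, Order.succ_eq_add_one] at hcover
  obtain ⟨j, hj, hθj⟩ := mem_iUnion₂.1 (hcover.ge ⟨hpos, hθ.2.le⟩)
  rcases hθj.2.eq_or_lt with rfl | hlt
  · have hj' : j + 1 < n :=
      (vertexAngle_strictMono n).lt_iff_lt.1 (hθ.2.trans_eq vertexAngle_self.symm)
    exact ⟨⟨j + 1, hj'⟩, .inl (circPt_eq_circleMap ⟨j + 1, hj'⟩).symm⟩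
  · exact ⟨⟨j, hj.2⟩, .inr ⟨θ, ⟨hθj.1, hlt⟩, rfl⟩⟩

variable {p : Fin n × Fin n} {i j : Fin n} {z : ℂ}

lemma chordSide_pos_of_mem_openArc (hi : i ∈ Ico p.1 p.2) (hz : z ∈ openArc i) :
    0 < chordSide (vertexAngle n p.1) (vertexAngle n p.2) z := by
  obtain ⟨θ, hθ, rfl⟩ := hz
  have hmono := (vertexAngle_strictMono n).monotone
  refine chordSide_circleMap_pos ⟨(hmono hi.1).trans_lt hθ.1, hθ.2.trans_le (hmono hi.2)⟩ ?_
  linarith [vertexAngle_nonneg (n := n) p.1, vertexAngle_lt_two_pi p.2]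

lemma chordSide_neg_of_mem_openArc (hp : p.1 < p.2) (hi : i ∉ Ico p.1 p.2) (hz : z ∈ openArc i) :
    chordSide (vertexAngle n p.1) (vertexAngle n p.2) z < 0 := by
  obtain ⟨θ, hθ, rfl⟩ := hz
  have hmono := (vertexAngle_strictMono n).monotone
  refine chordSide_circleMap_neg (vertexAngle_nonneg _) (hmono hp.le) (vertexAngle_lt_two_pi _)
    (Ioo_vertexAngle_subset i hθ) fun h => hi ⟨?_, ?_⟩
  · exact Nat.le_of_lt_succ ((vertexAngle_strictMono n).lt_iff_lt.1 (h.1.trans_lt hθ.2))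
  · exact (vertexAngle_strictMono n).lt_iff_lt.1 (hθ.1.trans_le h.2)

end Arcs

section Regions

variable {n : ℕ} {D : Finset (Fin n × Fin n)} {i j : Fin n} {z w : ℂ} {C : Set ℂ}

/-- The arcs following the points labeled `i` and `j` lie on the same side of every chord in `D`:
the arc following `v` is cut off by the chord `q` from the last arc exactly when
`q.1 ≤ v < q.2`. -/
def SameSide (D : Finset (Fin n × Fin n)) (i j : Fin n) : Prop :=
  ∀ q ∈ D, i ∈ Ico q.1 q.2 ↔ j ∈ Ico q.1 q.2

lemma SameSide.refl (D : Finset (Fin n × Fin n)) (i : Fin n) : SameSide D i i :=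
  fun _ _ => Iff.rfl

/-- The region of the chord configuration `D` bordering the arc that follows the point
labeled `i`. -/
noncomputable def arcRegion (D : Finset (Fin n × Fin n)) (i : Fin n) : Set ℂ :=
  connectedComponentIn (diskComplement D)
    (circleMap 0 1 ((vertexAngle n i + vertexAngle n (i + 1)) / 2))

lemma chordSide_eq_zero_of_mem_chordSeg {q : Fin n × Fin n} (hz : z ∈ chordSeg n q) :
    chordSide (vertexAngle n q.1) (vertexAngle n q.2) z = 0 := by
  rw [chordSeg, circPt_eq_circleMap, circPt_eq_circleMap] at hz
  exact chordSide_eq_zero_of_mem_segment hz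

variable [NeZero n]

variable (hD : ∀ q ∈ D, q.1 < q.2)

include hD

lemma SameSide.segment_subset_diskComplement (hij : SameSide D i j) (hz : z ∈ openArc i)
    (hw : w ∈ openArc j) : segment ℝ z w ⊆ diskComplement D := by
  intro x hx
  refine ⟨(convex_closedBall 0 1).segment_subset
    (Metric.sphere_subset_closedBall (openArc_subset_sphere i hz))
    (Metric.sphere_subset_closedBall (openArc_subset_sphere j hw)) hx, fun hxD => ?_⟩
  obtain ⟨q, hq, hxq⟩ := mem_iUnion₂.1 hxD
  have hx0 := chordSide_eq_zero_of_mem_chordSeg hxq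
  by_cases hi : i ∈ Ico q.1 q.2
  · exact ((convex_setOf_chordSide_pos _ _).segment_subset (chordSide_pos_of_mem_openArc hi hz)
      (chordSide_pos_of_mem_openArc ((hij q hq).1 hi) hw) hx).ne' hx0
  · exact ((convex_setOf_chordSide_neg _ _).segment_subset
      (chordSide_neg_of_mem_openArc (hD q hq) hi hz)
      (chordSide_neg_of_mem_openArc (hD q hq) (mt (hij q hq).2 hi) hw) hx).ne hx0

lemma SameSide.connectedComponentIn_eq (hij : SameSide D i j) (hz : z ∈ openArc i)
    (hw : w ∈ openArc j) :
    connectedComponentIn (diskComplement D) z = connectedComponentIn (diskComplement D) w :=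
  _root_.connectedComponentIn_eq <|
    (convex_segment z w).isPreconnected.subset_connectedComponentIn (left_mem_segment ℝ z w)
      (hij.segment_subset_diskComplement hD hz hw) (right_mem_segment ℝ z w)

lemma openArc_subset_diskComplement : openArc i ⊆ diskComplement D := fun z hz =>
  (SameSide.refl D i).segment_subset_diskComplement hD hz hz
    (left_mem_segment ℝ z z)

lemma SameSide.arcRegion_eq (hij : SameSide D i j) : arcRegion D i = arcRegion D j :=
  hij.connectedComponentIn_eq hD (circleMap_midpoint_mem_openArc i)
    (circleMap_midpoint_mem_openArc j)

lemma arcRegion_eq_connectedComponentIn (hz : z ∈ openArc i) :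
    arcRegion D i = connectedComponentIn (diskComplement D) z :=
  (SameSide.refl D i).connectedComponentIn_eq hD (circleMap_midpoint_mem_openArc i) hz

lemma arcRegion_mem_regions (i : Fin n) : arcRegion D i ∈ regions D :=
  ⟨_, openArc_subset_diskComplement hD (circleMap_midpoint_mem_openArc i), rfl⟩

lemma openArc_subset_arcRegion (i : Fin n) : openArc i ⊆ arcRegion D i := fun _ hz =>
  arcRegion_eq_connectedComponentIn hD hz ▸
    mem_connectedComponentIn (openArc_subset_diskComplement hD hz)

lemma arcRegion_eq_of_mem (hC : C ∈ regions D) (hz : z ∈ openArc i) (hzC : z ∈ C) :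
    arcRegion D i = C := by
  obtain ⟨x, -, rfl⟩ := hC
  rw [arcRegion_eq_connectedComponentIn hD hz, ← connectedComponentIn_eq hzC]

end Regions

namespace CircMatching

variable {n : ℕ} (M : CircMatching n) {C : Set ℂ}

lemma circPt_notMem_diskComplement (v : Fin n) : circPt n v ∉ diskComplement M.chords := by
  intro hv
  obtain ⟨q, ⟨hq, rfl | rfl⟩, -⟩ := M.mem_unique v
  · exact hv.2 (mem_biUnion hq (left_mem_segment ℝ _ _))
  · exact hv.2 (mem_biUnion hq (right_mem_segment ℝ _ _))

variable [NeZero n]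

lemma exists_mem_openArc {z : ℂ} (hz : z ∈ diskComplement M.chords)
    (hz' : z ∈ Metric.sphere 0 1) : ∃ i : Fin n, z ∈ openArc i := by
  obtain ⟨i, rfl | hi⟩ := exists_eq_circPt_or_mem_openArc (n := n) hz'
  · exact (M.circPt_notMem_diskComplement i hz).elim
  · exact ⟨i, hi⟩

lemma inter_sphere_eq_iUnion_openArc (hC : C ∈ regions M.chords) :
    C ∩ Metric.sphere 0 1 = ⋃ i : arcRegion M.chords ⁻¹' {C}, openArc i.1 := by
  refine Subset.antisymm (fun z ⟨hzC, hz⟩ => ?_) (iUnion_subset ?_)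
  · have hCD : C ⊆ diskComplement M.chords := by
      obtain ⟨x, -, rfl⟩ := hC
      exact connectedComponentIn_subset _ _
    obtain ⟨i, hi⟩ := M.exists_mem_openArc (hCD hzC) hz
    exact mem_iUnion.2 ⟨⟨i, arcRegion_eq_of_mem M.lt hC hi hzC⟩, hi⟩
  · rintro ⟨i, rfl⟩
    exact subset_inter (openArc_subset_arcRegion M.lt i) (openArc_subset_sphere i)

lemma arcCount_eq_ncard (hC : C ∈ regions M.chords) :
    arcCount C = (arcRegion M.chords ⁻¹' {C}).ncard := by
  have hunion := M.inter_sphere_eq_iUnion_openArc hC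
  let U (i : arcRegion M.chords ⁻¹' {C}) : Set ↥(C ∩ Metric.sphere (0 : ℂ) 1) :=
    (↑) ⁻¹' openArc i.1
  have hopen (i) : IsOpen (U i) := by
    have : U i = (↑) ⁻¹' {z | 0 < chordSide (vertexAngle n i.1) (vertexAngle n (i.1 + 1)) z} :=
      ext fun z => mem_openArc_iff i.1 z.2.2
    rw [this]
    exact (isOpen_lt continuous_const (continuous_chordSide _ _)).preimage continuous_subtype_val
  have hconn (i) : IsConnected (U i) := by
    have himage : (↑) '' U i = openArc i.1 := by
      rw [Subtype.image_preimage_coe, hunion, inter_eq_right]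
      exact subset_iUnion_of_subset i Subset.rfl
    rw [IsConnected, ← image_nonempty, ← Topology.IsInducing.subtypeVal.isPreconnected_image,
      himage]
    exact isConnected_openArc i.1
  refine card_connectedComponents_eq hopen hconn (fun i j hij => ?_) ?_
  · exact (pairwise_disjoint_openArc (Subtype.coe_ne_coe.2 hij)).preimage _
  · rw [← preimage_iUnion, ← hunion, Subtype.coe_preimage_self]

lemma nReg_eq_fiberCount {i : ℕ} (hi : i ≠ 0) :
    nReg M.chords i = fiberCount (arcRegion M.chords) i := by
  rw [nReg, fiberCount, ← Nat.card_coe_set_eq]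
  refine Nat.card_congr (Equiv.subtypeEquivRight fun C => ⟨?_, fun h => ?_⟩)
  · rintro ⟨hC, rfl⟩
    exact (M.arcCount_eq_ncard hC).symm
  · obtain ⟨v, rfl⟩ := nonempty_of_ncard_ne_zero (h.trans_ne hi)
    have hC := arcRegion_mem_regions M.lt v
    exact ⟨hC, (M.arcCount_eq_ncard hC).trans h⟩

end CircMatching

section CyclicOrder

variable {n : ℕ}

lemma coe_finRotate_eq_ite (i : Fin n) :
    (finRotate n i : ℕ) = if (i : ℕ) + 1 = n then 0 else (i : ℕ) + 1 := by
  cases n with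
  | zero => exact i.elim0
  | succ n => simp only [coe_finRotate, Fin.ext_iff, Fin.val_last, Nat.add_right_cancel_iff]

lemma finRotate_mem_Ico_iff {i a b : Fin n} (ha : finRotate n i ≠ a) (hb : finRotate n i ≠ b) :
    finRotate n i ∈ Ico a b ↔ i ∈ Ico a b := by
  have := coe_finRotate_eq_ite i
  simp only [mem_Ico, Fin.le_def, Fin.lt_def, ne_eq, Fin.ext_iff] at *
  split_ifs at this <;> lia

lemma exists_finRotate_iterate_eq (a v : Fin n) : ∃ m : ℕ, (finRotate n)^[m] a = v := by
  have : NeZero n := a.neZero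
  exact ⟨(v - a).1, by simp [← finCycle_eq_finRotate_iterate]⟩

lemma finRotate_induction {s : Set (Fin n)} {P : Fin n → Prop} {a : Fin n} (ha : P a)
    (hs : ∀ v, finRotate n v ∈ s → finRotate n v ≠ a → v ∈ s)
    (step : ∀ v ∈ s, P v → P (finRotate n v)) : ∀ v ∈ s, P v := by
  intro v
  obtain ⟨m, rfl⟩ := exists_finRotate_iterate_eq a v
  induction m with
  | zero => exact fun _ => ha
  | succ m ih =>
    rw [Function.iterate_succ_apply']
    intro hm
    by_cases hma : finRotate n ((finRotate n)^[m] a) = a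
    · rwa [hma]
    · exact step _ (hs _ hm hma) (ih (hs _ hm hma))

end CyclicOrder

section CrossingGraph

variable {n : ℕ} {D : Finset (Fin n × Fin n)}

lemma CrossRel.fst_mem_Ico_iff {p p' q : Fin n × Fin n} (h : CrossRel p p')
    (hp : p.1 ∈ Ico q.1 q.2 ↔ p.2 ∈ Ico q.1 q.2)
    (hp' : p'.1 ∈ Ico q.1 q.2 ↔ p'.2 ∈ Ico q.1 q.2) :
    p.1 ∈ Ico q.1 q.2 ↔ p'.1 ∈ Ico q.1 q.2 := by
  simp only [CrossRel, Interleaves, mem_Ico] at *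
  lia

/-- The graph whose vertices are the chords in `D`, two chords being adjacent when they cross. -/
def crossingGraph (D : Finset (Fin n × Fin n)) : SimpleGraph D where
  Adj p q := CrossRel p.1 q.1
  symm := ⟨fun _ _ => Or.symm⟩
  loopless := ⟨fun _ h => h.elim (fun h => h.1.false) fun h => h.1.false⟩

lemma card_edgeSet_crossingGraph : Nat.card (crossingGraph D).edgeSet = crossNum D := by
  let crossings := (D ×ˢ D).filter fun pq => Interleaves pq.1 pq.2
  have hmem (x : crossings) : (x.1.1 ∈ D ∧ x.1.2 ∈ D) ∧ Interleaves x.1.1 x.1.2 := by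
    simpa only [crossings, Finset.mem_filter, Finset.mem_product] using x.2
  let edge (x : crossings) : (crossingGraph D).edgeSet :=
    ⟨s(⟨x.1.1, (hmem x).1.1⟩, ⟨x.1.2, (hmem x).1.2⟩), .inl (hmem x).2⟩
  have hedge : Function.Bijective edge := by
    refine ⟨fun x y hxy => ?_, fun ⟨e, he⟩ => ?_⟩
    · rcases Sym2.eq_iff.1 (Subtype.ext_iff.1 hxy) with ⟨h₁, h₂⟩ | ⟨h₁, h₂⟩
      · exact Subtype.ext (Prod.ext (Subtype.ext_iff.1 h₁) (Subtype.ext_iff.1 h₂))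
      · have hx := (hmem x).2.1
        have hy := (hmem y).2.1
        rw [show x.1.1 = y.1.2 from Subtype.ext_iff.1 h₁,
          show x.1.2 = y.1.1 from Subtype.ext_iff.1 h₂] at hx
        exact (hx.asymm hy).elim
    · induction e with
      | h p q =>
        rcases he with h | h
        · exact ⟨⟨(p, q), by simp [crossings, h]⟩, rfl⟩
        · exact ⟨⟨(q, p), by simp [crossings, h]⟩, Subtype.ext Sym2.eq_swap⟩
  rw [crossNum, ← Nat.card_eq_finsetCard, Nat.card_congr (Equiv.ofBijective edge hedge)]

end CrossingGraph

namespace CircMatching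

variable {n : ℕ} (M : CircMatching n)

/-- The chord having the point labeled `v` as an endpoint. -/
noncomputable def chordAt (v : Fin n) : M.chords :=
  ⟨(M.mem_unique v).choose, (M.mem_unique v).choose_spec.1.1⟩

/-- The connected component of the crossing graph containing the chord at the point labeled `v`. -/
noncomputable def component (v : Fin n) : (crossingGraph M.chords).ConnectedComponent :=
  (crossingGraph M.chords).connectedComponentMk (M.chordAt v)

lemma chordAt_spec (v : Fin n) : (M.chordAt v).1.1 = v ∨ (M.chordAt v).1.2 = v :=
  (M.mem_unique v).choose_spec.1.2

variable {M}

lemma eq_of_common_endpoint {p q : M.chords} {v : Fin n} (hp : p.1.1 = v ∨ p.1.2 = v)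
    (hq : q.1.1 = v ∨ q.1.2 = v) : p = q :=
  Subtype.ext ((M.mem_unique v).unique ⟨p.2, hp⟩ ⟨q.2, hq⟩)

lemma component_eq_of_endpoint {p : M.chords} {v : Fin n} (hp : p.1.1 = v ∨ p.1.2 = v) :
    M.component v = (crossingGraph M.chords).connectedComponentMk p := by
  rw [component, eq_of_common_endpoint (M.chordAt_spec v) hp]

lemma component_surjective : Function.Surjective M.component :=
  SimpleGraph.ConnectedComponent.ind fun p => ⟨p.1.1, component_eq_of_endpoint (.inl rfl)⟩

lemma fst_mem_Ico_iff_snd_mem_Ico_of_not_adj {p q : M.chords} (hne : p ≠ q)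
    (hadj : ¬ (crossingGraph M.chords).Adj p q) :
    p.1.1 ∈ Ico q.1.1 q.1.2 ↔ p.1.2 ∈ Ico q.1.1 q.1.2 := by
  have h11 : p.1.1 ≠ q.1.1 := fun h => hne (eq_of_common_endpoint (.inl rfl) (.inl h.symm))
  have h12 : p.1.1 ≠ q.1.2 := fun h => hne (eq_of_common_endpoint (.inl rfl) (.inr h.symm))
  have h21 : p.1.2 ≠ q.1.1 := fun h => hne (eq_of_common_endpoint (.inr rfl) (.inl h.symm))
  have h22 : p.1.2 ≠ q.1.2 := fun h => hne (eq_of_common_endpoint (.inr rfl) (.inr h.symm))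
  have hp := M.lt p.1 p.2
  simp only [crossingGraph, CrossRel, Interleaves, mem_Ico] at *
  lia

lemma fst_mem_Ico_iff_of_reachable {p p' q : M.chords} (h : (crossingGraph M.chords).Reachable p p')
    (hq : ¬ (crossingGraph M.chords).Reachable p q) :
    p.1.1 ∈ Ico q.1.1 q.1.2 ↔ p'.1.1 ∈ Ico q.1.1 q.1.2 := by
  have hends {r : M.chords} (hr : (crossingGraph M.chords).Reachable p r) :
      r.1.1 ∈ Ico q.1.1 q.1.2 ↔ r.1.2 ∈ Ico q.1.1 q.1.2 :=
    fst_mem_Ico_iff_snd_mem_Ico_of_not_adj (fun hrq => hq (hrq ▸ hr))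
      fun hrq => hq (hr.trans hrq.reachable)
  obtain ⟨walk⟩ := h
  induction walk with
  | nil => rfl
  | cons hadj _ ih =>
    rw [CrossRel.fst_mem_Ico_iff hadj (hends .rfl) (hends hadj.reachable)]
    exact ih (fun h => hq (hadj.reachable.trans h)) fun hr => hends (hadj.reachable.trans hr)

lemma mem_Ico_iff_of_component_eq {v w : Fin n} {q : M.chords} (h : M.component v = M.component w)
    (hq : M.component v ≠ (crossingGraph M.chords).connectedComponentMk q) :
    v ∈ Ico q.1.1 q.1.2 ↔ w ∈ Ico q.1.1 q.1.2 := by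
  have hleft {u : Fin n} (hu : M.component u ≠ (crossingGraph M.chords).connectedComponentMk q) :
      u ∈ Ico q.1.1 q.1.2 ↔ (M.chordAt u).1.1 ∈ Ico q.1.1 q.1.2 := by
    have hends := fst_mem_Ico_iff_snd_mem_Ico_of_not_adj (p := M.chordAt u) (q := q)
      (fun h => hu (congrArg _ h))
      fun h => hu (SimpleGraph.ConnectedComponent.sound h.reachable)
    rcases M.chordAt_spec u with hu | hu
    · rw [hu]
    · rw [hends, hu]
  have hvw := fst_mem_Ico_iff_of_reachable (SimpleGraph.ConnectedComponent.exact h)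
    fun h => hq (SimpleGraph.ConnectedComponent.sound h)
  exact (hleft hq).trans (hvw.trans (hleft (h ▸ hq)).symm)

lemma finRotate_mem_Ico_iff_of_component_ne {v : Fin n} {q : M.chords}
    (h : M.component (finRotate n v) ≠ (crossingGraph M.chords).connectedComponentMk q) :
    finRotate n v ∈ Ico q.1.1 q.1.2 ↔ v ∈ Ico q.1.1 q.1.2 :=
  finRotate_mem_Ico_iff (fun hv => h (component_eq_of_endpoint (.inl hv.symm)))
    fun hv => h (component_eq_of_endpoint (.inr hv.symm))

/-- The points labeled `v` for which the arc following `v` is mixed: the chords at its two ends lie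
in different components of the crossing graph. -/
def mixedArcs (M : CircMatching n) : Set (Fin n) :=
  {v | M.component (finRotate n v) ≠ M.component v}

lemma exists_sameSide_of_mem_mixedArcs {v : Fin n} (hv : v ∈ M.mixedArcs) :
    ∃ j ≠ v, SameSide M.chords j v := by
  classical
  have hreturn : ∃ m, M.component (finRotate n ((finRotate n)^[m] v)) = M.component v := by
    obtain ⟨m, hm⟩ := exists_finRotate_iterate_eq (finRotate n v) v
    exact ⟨m, by rw [← Function.iterate_succ_apply' (finRotate n), Function.iterate_succ_apply, hm]⟩
  let m := Nat.find hreturn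
  have hm : M.component (finRotate n ((finRotate n)^[m] v)) = M.component v := Nat.find_spec hreturn
  refine ⟨(finRotate n)^[m] v, fun h => hv (by rwa [h] at hm), fun q hq => ?_⟩
  by_cases hqv : M.component v = (crossingGraph M.chords).connectedComponentMk ⟨q, hq⟩
  · have hbefore {i : ℕ} (hi : i ≤ m) : (finRotate n)^[i] v ∈ Ico q.1 q.2 ↔ v ∈ Ico q.1 q.2 := by
      induction i with
      | zero => rfl
      | succ i ih =>
        have hne : M.component (finRotate n ((finRotate n)^[i] v)) ≠ M.component v :=
          Nat.find_min hreturn hi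
        rw [Function.iterate_succ_apply']
        exact (finRotate_mem_Ico_iff_of_component_ne (hqv ▸ hne)).trans (ih (Nat.le_of_succ_le hi))
    exact hbefore le_rfl
  · exact (finRotate_mem_Ico_iff_of_component_ne (hm ▸ hqv)).symm.trans
      (mem_Ico_iff_of_component_eq hm (hm ▸ hqv))

lemma exists_mem_mixedArcs_of_component_ne {s : Set (Fin n)} {a v : Fin n}
    (hs : ∀ w, finRotate n w ∈ s → finRotate n w ≠ a → w ∈ s)
    (hv : v ∈ s) (hva : M.component v ≠ M.component a) :
    ∃ e ∈ M.mixedArcs, e ∈ s ∧ M.component e = M.component a := by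
  by_contra! h
  refine hva (finRotate_induction (P := fun w => M.component w = M.component a) rfl hs ?_ v hv)
  intro w hw hwa
  have hnext : M.component (finRotate n w) = M.component w :=
    not_not.1 fun hmixed => h w hmixed hw hwa
  exact hnext.trans hwa

lemma exists_mem_mixedArcs_of_mem {s : Set (Fin n)} {a v : Fin n}
    (hs : ∀ w, finRotate n w ∈ s → finRotate n w ≠ a → w ∈ s)
    (hv : v ∈ s) (hvM : v ∈ M.mixedArcs) :
    ∃ e ∈ M.mixedArcs, e ∈ s ∧ M.component e = M.component a := by
  by_cases hva : M.component v = M.component a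
  · exact ⟨v, hvM, hv, hva⟩
  · exact exists_mem_mixedArcs_of_component_ne hs hv hva

lemma image_component_mixedArcs
    (hc : 1 < Nat.card (crossingGraph M.chords).ConnectedComponent) :
    M.component '' M.mixedArcs = univ := by
  have : Nontrivial (crossingGraph M.chords).ConnectedComponent :=
    Finite.one_lt_card_iff_nontrivial.1 hc
  refine eq_univ_of_forall fun C => ?_
  obtain ⟨a, rfl⟩ := M.component_surjective C
  obtain ⟨C', hC'⟩ := exists_ne (M.component a)
  obtain ⟨v, rfl⟩ := M.component_surjective C'
  obtain ⟨e, he, -, hea⟩ := exists_mem_mixedArcs_of_component_ne (s := univ)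
    (fun _ _ _ => mem_univ _) (mem_univ v) hC'
  exact ⟨e, he, hea⟩

lemma card_connectedComponent_le_ncard_mixedArcs
    (hc : 1 < Nat.card (crossingGraph M.chords).ConnectedComponent) :
    Nat.card (crossingGraph M.chords).ConnectedComponent ≤ M.mixedArcs.ncard := by
  rw [← ncard_univ, ← image_component_mixedArcs hc]
  exact ncard_image_le

lemma injOn_component_mixedArcs
    (hc : 1 < Nat.card (crossingGraph M.chords).ConnectedComponent)
    (h : M.mixedArcs.ncard ≤ Nat.card (crossingGraph M.chords).ConnectedComponent) :
    InjOn M.component M.mixedArcs := by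
  rw [← ncard_univ, ← image_component_mixedArcs hc] at h
  exact injOn_of_ncard_image_eq (le_antisymm ncard_image_le h)

lemma sameSide_of_mem_mixedArcs (hinj : InjOn M.component M.mixedArcs) {v w : Fin n}
    (hv : v ∈ M.mixedArcs) (hw : w ∈ M.mixedArcs) : SameSide M.chords v w := by
  intro q hq
  have hinside {u : Fin n} (hu : u ∈ M.mixedArcs) (huq : u ∈ Ico q.1 q.2) :
      ∃ e ∈ M.mixedArcs, e ∈ Ico q.1 q.2 ∧ M.component e = M.component q.1 := by
    refine exists_mem_mixedArcs_of_mem (fun x hx hne => ?_) huq hu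
    exact (finRotate_mem_Ico_iff hne hx.2.ne).1 hx
  have houtside {u : Fin n} (hu : u ∈ M.mixedArcs) (huq : u ∉ Ico q.1 q.2) :
      ∃ e ∈ M.mixedArcs, e ∈ (Ico q.1 q.2)ᶜ ∧ M.component e = M.component q.2 := by
    refine exists_mem_mixedArcs_of_mem (fun x hx hne => ?_) huq hu
    have hne' : finRotate n x ≠ q.1 := fun h => hx ⟨h.ge, h.trans_lt (M.lt q hq)⟩
    exact mt (finRotate_mem_Ico_iff hne' hne).2 hx
  have hends : M.component q.1 = M.component q.2 :=
    (component_eq_of_endpoint (p := ⟨q, hq⟩) (.inl rfl)).trans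
      (component_eq_of_endpoint (.inr rfl)).symm
  have hmem {x y : Fin n} (hx : x ∈ M.mixedArcs) (hy : y ∈ M.mixedArcs)
      (hxq : x ∈ Ico q.1 q.2) : y ∈ Ico q.1 q.2 := by
    by_contra hyq
    obtain ⟨e, he, heq, hce⟩ := hinside hx hxq
    obtain ⟨e', he', heq', hce'⟩ := houtside hy hyq
    exact heq' (hinj he he' (hce.trans (hends.trans hce'.symm)) ▸ heq)
  exact ⟨hmem hv hw, hmem hw hv⟩

variable (M) in
lemma le_two_mul_card_chords : n ≤ 2 * M.chords.card := by
  have hcover : Finset.univ ⊆ M.chords.biUnion fun p => {p.1, p.2} := fun v _ =>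
    Finset.mem_biUnion.2 ⟨_, (M.chordAt v).2, by simpa [eq_comm] using M.chordAt_spec v⟩
  calc n = (Finset.univ : Finset (Fin n)).card := (Finset.card_fin n).symm
    _ ≤ M.chords.card * 2 := (Finset.card_le_card hcover).trans
        (Finset.card_biUnion_le_card_mul _ _ 2 fun _ _ => Finset.card_le_two)
    _ = 2 * M.chords.card := mul_comm _ _

variable (M) in
lemma le_two_mul_crossNum_add_card_connectedComponent :
    n ≤ 2 * (crossNum M.chords + Nat.card (crossingGraph M.chords).ConnectedComponent) := by
  have hforest := card_le_card_edgeSet_add_card_connectedComponent (crossingGraph M.chords)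
  rw [Nat.card_eq_finsetCard, card_edgeSet_crossingGraph] at hforest
  exact M.le_two_mul_card_chords.trans (Nat.mul_le_mul_left 2 hforest)

end CircMatching

lemma IsCoreMatching.card_connectedComponent_le_crossNum {n : ℕ} {M : CircMatching n}
    (hcore : IsCoreMatching M) :
    Nat.card (crossingGraph M.chords).ConnectedComponent ≤ crossNum M.chords := by
  rw [← card_edgeSet_crossingGraph]
  refine card_connectedComponent_le_card_edgeSet fun p => ?_
  obtain ⟨q, hq, hpq⟩ := hcore p.1 p.2
  exact ⟨⟨q, hq⟩, hpq⟩

namespace CircMatching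

variable {n : ℕ} {M : CircMatching n}

variable (M) in
lemma neZero_of_crossNum_ne_zero (h : crossNum M.chords ≠ 0) : NeZero n := by
  refine ⟨?_⟩
  rintro rfl
  exact h (by rw [Finset.eq_empty_of_isEmpty M.chords]; rfl)

variable [NeZero n]

lemma exists_arcRegion_eq_of_mem_mixedArcs (v : Fin n) (hv : v ∈ M.mixedArcs) :
    ∃ j ≠ v, arcRegion M.chords j = arcRegion M.chords v := by
  obtain ⟨j, hj, hjv⟩ := exists_sameSide_of_mem_mixedArcs hv
  exact ⟨j, hj, hjv.arcRegion_eq M.lt⟩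

variable (M) in
lemma nReg_one_add_ncard_mixedArcs_le : nReg M.chords 1 + M.mixedArcs.ncard ≤ n := by
  rw [M.nReg_eq_fiberCount one_ne_zero]
  simpa only [Nat.card_fin] using fiberCount_one_add_ncard_le (f := arcRegion M.chords)
    exists_arcRegion_eq_of_mem_mixedArcs

section Extremal

variable (h : nReg M.chords 1 + M.mixedArcs.ncard = n) (hinj : InjOn M.component M.mixedArcs)

include h in
lemma arcRegion_fiber_eq_singleton (v : Fin n) (hv : v ∉ M.mixedArcs) :
    arcRegion M.chords ⁻¹' {arcRegion M.chords v} = {v} := by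
  rw [M.nReg_eq_fiberCount one_ne_zero] at h
  exact fiber_eq_singleton_of_fiberCount_one_add_ncard_eq exists_arcRegion_eq_of_mem_mixedArcs
    (h.trans (Nat.card_fin n).symm) hv

include hinj in
lemma arcRegion_eq_of_mem_mixedArcs (v : Fin n) (hv : v ∈ M.mixedArcs) (w : Fin n)
    (hw : w ∈ M.mixedArcs) : arcRegion M.chords v = arcRegion M.chords w :=
  (sameSide_of_mem_mixedArcs hinj hv hw).arcRegion_eq M.lt

include h hinj

lemma nReg_ncard_mixedArcs_eq_one (hcard : 1 < M.mixedArcs.ncard) :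
    nReg M.chords M.mixedArcs.ncard = 1 := by
  rw [M.nReg_eq_fiberCount (by lia)]
  exact fiberCount_ncard_eq_one (arcRegion_eq_of_mem_mixedArcs hinj)
    (arcRegion_fiber_eq_singleton h) hcard

lemma nReg_eq_zero {i : ℕ} (h0 : i ≠ 0) (h1 : i ≠ 1) (hi : i ≠ M.mixedArcs.ncard) :
    nReg M.chords i = 0 := by
  rw [M.nReg_eq_fiberCount h0]
  exact fiberCount_eq_zero (arcRegion_eq_of_mem_mixedArcs hinj)
    (arcRegion_fiber_eq_singleton h) h0 h1 hi

end Extremal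

end CircMatching

/-- For a core matching `K` with `k(K) ≥ 3` crossings, `n₁(K) ≤ 3 k(K)`, and
equality holds if and only if `n₁(K) = 3k`, `n_k(K) = 1` and `nᵢ(K) = 0` for
`i ∉ {1, k}` (`i` ranging over the positive integers). -/
theorem coreMatching_nReg_one_le_three_k {n k : ℕ} (M : CircMatching n)
    (hcore : IsCoreMatching M) (hk : crossNum M.chords = k) (hk3 : 3 ≤ k) :
    nReg M.chords 1 ≤ 3 * k ∧
    (nReg M.chords 1 = 3 * k ↔
      (nReg M.chords 1 = 3 * k ∧ nReg M.chords k = 1 ∧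
        ∀ i : ℕ, 1 ≤ i → i ≠ 1 → i ≠ k → nReg M.chords i = 0)) := by
  have := M.neZero_of_crossNum_ne_zero (by lia)
  have hone := M.nReg_one_add_ncard_mixedArcs_le
  have hpoints := M.le_two_mul_crossNum_add_card_connectedComponent
  have hcomponents := hcore.card_connectedComponent_le_crossNum
  rcases le_or_gt (Nat.card (crossingGraph M.chords).ConnectedComponent) 1 with hc | hc
  · have hlt : nReg M.chords 1 < 3 * k := by lia
    exact ⟨hlt.le, iff_of_false hlt.ne fun h => hlt.ne h.1⟩
  · have hmixed := CircMatching.card_connectedComponent_le_ncard_mixedArcs hc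
    refine ⟨by lia, fun heq => ⟨heq, ?_⟩, And.left⟩
    have hinj := CircMatching.injOn_component_mixedArcs hc (by lia)
    have hn : nReg M.chords 1 + M.mixedArcs.ncard = n := by lia
    obtain rfl : M.mixedArcs.ncard = k := by lia
    exact ⟨CircMatching.nReg_ncard_mixedArcs_eq_one hn hinj (by lia), fun i hi h1 hik =>
      CircMatching.nReg_eq_zero hn hinj (Nat.ne_zero_of_lt hi) h1 hik⟩
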